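/- arXiv:1806.10700 — 2 statements merged into one kernel-verified Lean document; each statement's English description precedes it below -/
import Mathlib

section
/- Fix an infinite totally ordered index set 𝔦 and positive integers ℓ, m. Let P be the poset that is the disjoint union of two chains {i_1 < … < i_ℓ} and {j_1 < … < j_m} (with no order relations between elements of different chains). Then for compositions I = (I_1, …, I_ℓ) and J = (J_1, …, J_m), the product of monomial quasisymmetric functions satisfies M_I · M_J = Σ_f M_{f̃}, where f ranges over all surjective, strictly order-preserving maps f: P → {1, …, n} for some n ∈ ℕ, and the composition f̃ of length n is defined by (f̃)_x := Σ_{i_u ∈ f⁻¹(x)} I_u + Σ_{j_u ∈ f⁻¹(x)} J_u. -/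
/-!
STATEMENT 4: For an infinite totally ordered index set, compositions `I` (of length `ℓ`) and
`J` (of length `m`), the product of the monomial quasisymmetric functions is
`M_I · M_J = Σ_f M_{f̃}`, where `f` ranges over all surjective strictly order-preserving maps
from the disjoint union of the two chains `Fin ℓ` and `Fin m` (with no relations between the
two chains, i.e. the canonical partial order on `Fin ℓ ⊕ Fin m`) to a chain `{1, …, n}`, and
`(f̃)_x = Σ_{i_u ∈ f⁻¹(x)} I_u + Σ_{j_u ∈ f⁻¹(x)} J_u`.
(Such a surjective strictly order-preserving map forces `n ≤ ℓ + m`, so the outer sum over `n`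
is written as the finite sum over `n ≤ ℓ + m`.)
-/

open MvPowerSeries

noncomputable section

/-- The exponent vector of the monomial `α_{i 0}^{l 0} ⋯ α_{i (ℓ-1)}^{l (ℓ-1)}`. -/
def qsMonomN {ι : Type*} (l : List ℕ) (i : Fin l.length → ι) : ι →₀ ℕ :=
  ∑ k : Fin l.length, Finsupp.single (i k) (l.get k)

open Classical in
/-- The monomial quasisymmetric function `M_I` attached to a list `I` of exponents. -/
def MqsN (ι : Type*) [LinearOrder ι] (I : List ℕ) : MvPowerSeries ι ℤ :=
  fun d => if ∃ i : Fin I.length → ι, StrictMono i ∧ d = qsMonomN I i then 1 else 0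

/- For a finite poset `P` with weights `w : P → ℕ`, sum the monomials `∏ p, α_{g p} ^ w p` over all
strictly order-preserving `g : P → ι`. A chain gives a monomial quasisymmetric function, and a
disjoint union of posets gives the product of the two series. Every `g` factors uniquely through
its image as a surjective strictly order-preserving map `f : P → Fin n` followed by a strictly
increasing sequence `Fin n → ι`, so collecting the maps `g` according to `f` expands the series of
any poset, in particular of two disjoint chains, into series of chains. -/

open Function

section Exponents

variable {ι P Q : Type*} [Fintype P]

/-- The exponent vector of the monomial `∏ p, α_{g p} ^ w p`, for weights on any finite type;
`qsMonomN L` is the case `w = L.get`. -/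
def labellingExponent (w : P → ℕ) (g : P → ι) : ι →₀ ℕ :=
  ∑ p, Finsupp.single (g p) (w p)

/-- The weights that a map `f : P → Q` pushes forward to `Q`; for `Q = Fin n` this is the
composition `f̃`. -/
def fiberWeight [DecidableEq Q] (w : P → ℕ) (f : P → Q) (x : Q) : ℕ :=
  ∑ p with f p = x, w p

theorem coe_support_labellingExponent {w : P → ℕ} (hw : ∀ p, 0 < w p) (g : P → ι) :
    ((labellingExponent w g).support : Set ι) = Set.range g := by
  classical
  ext x
  simp [labellingExponent, Finsupp.single_apply, (hw _).ne']

theorem labellingExponent_sumElim [Fintype Q] (v : P → ℕ) (w : Q → ℕ) (g : P ⊕ Q → ι) :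
    labellingExponent (Sum.elim v w) g =
      labellingExponent v (g ∘ Sum.inl) + labellingExponent w (g ∘ Sum.inr) :=
  Fintype.sum_sum_type _

theorem labellingExponent_comp [Fintype Q] [DecidableEq Q] (w : P → ℕ) (f : P → Q) (c : Q → ι) :
    labellingExponent w (c ∘ f) = labellingExponent (fiberWeight w f) c := by
  unfold labellingExponent fiberWeight
  rw [← Finset.sum_fiberwise Finset.univ f]
  refine Finset.sum_congr rfl fun x _ => ?_
  rw [Finsupp.single_finsetSum]
  refine Finset.sum_congr rfl fun p hp => ?_
  rw [comp_apply, (Finset.mem_filter.1 hp).2]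

theorem fiberWeight_pos [DecidableEq Q] {w : P → ℕ} (hw : ∀ p, 0 < w p) {f : P → Q}
    (hf : Surjective f) (x : Q) : 0 < fiberWeight w f x := by
  obtain ⟨p, hp⟩ := hf x
  exact Finset.sum_pos (fun p _ => hw p) ⟨p, by simpa using hp⟩

theorem fiberWeight_sumElim {S : Type*} [Fintype Q] [DecidableEq S] (v : P → ℕ) (w : Q → ℕ)
    (f : P ⊕ Q → S) :
    fiberWeight (Sum.elim v w) f =
      fun x => fiberWeight v (f ∘ Sum.inl) x + fiberWeight w (f ∘ Sum.inr) x := by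
  funext x
  simp only [fiberWeight, Finset.sum_filter, Fintype.sum_sum_type, Sum.elim_inl, Sum.elim_inr,
    comp_apply]

end Exponents

section StrictLabellings

variable {ι P Q : Type*} [Preorder P] [Preorder ι]

theorem strictMono_sum_iff [Preorder Q] {g : P ⊕ Q → ι} :
    StrictMono g ↔ StrictMono (g ∘ Sum.inl) ∧ StrictMono (g ∘ Sum.inr) := by
  simp [StrictMono]

variable [Fintype P]

/-- The strictly order-preserving maps `g : P → ι` whose monomial `∏ p, α_{g p} ^ w p` has exponent
vector `d`. -/
def StrictLabelling (w : P → ℕ) (d : ι →₀ ℕ) : Type _ :=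
  {g : P → ι // StrictMono g ∧ labellingExponent w g = d}

theorem StrictLabelling.finite {w : P → ℕ} (hw : ∀ p, 0 < w p) (d : ι →₀ ℕ) :
    Finite (StrictLabelling w d) := by
  have finite_maps : (Set.univ.pi fun _ : P => (d.support : Set ι)).Finite :=
    Set.Finite.pi fun _ => d.support.finite_toSet
  refine (finite_maps.subset ?_).to_subtype
  rintro g ⟨-, rfl⟩ p -
  rw [coe_support_labellingExponent hw]
  exact Set.mem_range_self p

/-- A strictly order-preserving map on a disjoint union is a pair of such maps, whose exponent
vectors add up. -/
def StrictLabelling.sumEquiv [Fintype Q] [Preorder Q] [DecidableEq ι] (v : P → ℕ) (w : Q → ℕ)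
    (d : ι →₀ ℕ) :
    StrictLabelling (Sum.elim v w) d ≃
      Σ e : Finset.HasAntidiagonal.antidiagonal d,
        StrictLabelling v e.1.1 × StrictLabelling w e.1.2 where
  toFun g :=
    ⟨⟨(labellingExponent v (g.1 ∘ Sum.inl), labellingExponent w (g.1 ∘ Sum.inr)),
        Finset.HasAntidiagonal.mem_antidiagonal.2
          ((labellingExponent_sumElim v w g.1).symm.trans g.2.2)⟩,
      ⟨g.1 ∘ Sum.inl, (strictMono_sum_iff.1 g.2.1).1, rfl⟩,
      ⟨g.1 ∘ Sum.inr, (strictMono_sum_iff.1 g.2.1).2, rfl⟩⟩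
  invFun x :=
    ⟨Sum.elim x.2.1.1 x.2.2.1, strictMono_sum_iff.2 ⟨x.2.1.2.1, x.2.2.2.1⟩, by
      rw [labellingExponent_sumElim, Sum.elim_comp_inl, Sum.elim_comp_inr, x.2.1.2.2, x.2.2.2.2]
      exact Finset.HasAntidiagonal.mem_antidiagonal.1 x.1.2⟩
  left_inv g := Subtype.ext (Sum.elim_comp_inl_inr g.1)
  right_inv := by
    rintro ⟨⟨⟨e₁, e₂⟩, _⟩, ⟨a, _, ha⟩, ⟨b, _, hb⟩⟩
    obtain rfl : labellingExponent v a = e₁ := ha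
    obtain rfl : labellingExponent w b = e₂ := hb
    rfl

end StrictLabellings

theorem StrictLabelling.subsingleton {ι P : Type*} [Fintype P] [LinearOrder P] [Preorder ι]
    {w : P → ℕ} (hw : ∀ p, 0 < w p) (d : ι →₀ ℕ) : Subsingleton (StrictLabelling w d) := by
  refine ⟨?_⟩
  rintro ⟨g, hg, rfl⟩ ⟨g', hg', h⟩
  refine Subtype.ext ((hg.range_inj hg').1 ?_)
  rw [← coe_support_labellingExponent hw g, ← h, coe_support_labellingExponent hw g']

section ChainQuotients

variable {ι P : Type*}

theorem sigma_eq_of_strictMono_comp_surjective [Preorder ι] {n n' : ℕ} {f : P → Fin n}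
    {f' : P → Fin n'} {c : Fin n → ι} {c' : Fin n' → ι} (hf : Surjective f) (hf' : Surjective f')
    (hc : StrictMono c) (hc' : StrictMono c') (h : c ∘ f = c' ∘ f') :
    (⟨n, f, c⟩ : Σ n, (P → Fin n) × (Fin n → ι)) = ⟨n', f', c'⟩ := by
  have range_eq : Set.range c = Set.range c' := by
    rw [← hf.range_comp c, ← hf'.range_comp c', h]
  obtain rfl : n = n' := by
    simpa [Set.ncard_range_of_injective, hc.injective, hc'.injective] using
      congrArg Set.ncard range_eq
  obtain rfl : c = c' := (hc.range_inj hc').1 range_eq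
  obtain rfl : f = f' := hc.injective.comp_left h
  rfl

variable [LinearOrder ι]

theorem exists_strictMono_comp_surjective [Finite P] (g : P → ι) :
    ∃ (n : ℕ) (f : P → Fin n) (c : Fin n → ι), Surjective f ∧ StrictMono c ∧ c ∘ f = g := by
  have := Fintype.ofFinite P
  let s : Finset ι := Finset.univ.image g
  have mem_s (p : P) : g p ∈ s := Finset.mem_image_of_mem g (Finset.mem_univ p)
  let e : Fin s.card ≃o s := s.orderIsoOfFin rfl
  refine ⟨s.card, fun p => e.symm ⟨g p, mem_s p⟩, fun k => e k, fun k => ?_, e.strictMono, ?_⟩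
  · obtain ⟨p, -, hp⟩ := Finset.mem_image.1 (e k).2
    exact ⟨p, (e.symm_apply_eq).2 (Subtype.ext hp)⟩
  · funext p
    simp

variable [Fintype P] [Preorder P]

open Classical in
/-- The surjective strictly order-preserving maps from `P` onto some chain `Fin n`. Surjectivity
forces `n ≤ Fintype.card P`, which makes this a finite set. -/
def chainQuotients (P : Type*) [Fintype P] [Preorder P] : Finset (Σ n, P → Fin n) :=
  (Finset.range (Fintype.card P + 1)).sigma fun _ => {f | Surjective f ∧ StrictMono f}

theorem mem_chainQuotients {x : Σ n, P → Fin n} :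
    x ∈ chainQuotients P ↔ Surjective x.2 ∧ StrictMono x.2 := by
  have card_lt (hx : Surjective x.2) : x.1 < Fintype.card P + 1 := by
    simpa [Nat.lt_succ_iff] using Fintype.card_le_of_surjective x.2 hx
  simp only [chainQuotients, Finset.mem_sigma, Finset.mem_range, Finset.mem_filter_univ]
  exact ⟨And.right, fun hx => ⟨card_lt hx.1, hx⟩⟩

/-- Composes a surjection `f` of `P` onto a chain with a strictly increasing sequence of
indices. -/
def StrictLabelling.ofChainQuotient (w : P → ℕ) (d : ι →₀ ℕ)
    (x : Σ f : chainQuotients P, StrictLabelling (fiberWeight w f.1.2) d) : StrictLabelling w d :=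
  ⟨x.2.1 ∘ x.1.1.2, x.2.2.1.comp (mem_chainQuotients.1 x.1.2).2,
    (labellingExponent_comp w x.1.1.2 x.2.1).trans x.2.2.2⟩

theorem StrictLabelling.ofChainQuotient_bijective (w : P → ℕ) (d : ι →₀ ℕ) :
    Bijective (StrictLabelling.ofChainQuotient w d) := by
  constructor
  · rintro ⟨⟨⟨n, f⟩, hf⟩, ⟨c, hc, hd⟩⟩ ⟨⟨⟨n', f'⟩, hf'⟩, ⟨c', hc', hd'⟩⟩ h
    cases sigma_eq_of_strictMono_comp_surjective (mem_chainQuotients.1 hf).1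
      (mem_chainQuotients.1 hf').1 hc hc' (congrArg Subtype.val h)
    rfl
  · rintro ⟨g, hg, hd⟩
    obtain ⟨n, f, c, hf, hc, rfl⟩ := exists_strictMono_comp_surjective g
    have f_strictMono : StrictMono f := fun _ _ hab => hc.lt_iff_lt.1 (hg hab)
    exact ⟨⟨⟨⟨n, f⟩, mem_chainQuotients.2 ⟨hf, f_strictMono⟩⟩,
      ⟨c, hc, (labellingExponent_comp w f c).symm.trans hd⟩⟩, rfl⟩

end ChainQuotients

section PosetQSym

variable (ι R : Type*) {P Q : Type*} [Fintype P] [Preorder P] [Semiring R]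

/-- The generating series `∑ g, ∏ p, α_{g p} ^ w p` over the strictly order-preserving maps
`g : P → ι`. It is meaningful for positive weights; otherwise a monomial may arise from infinitely
many `g`, and `Nat.card` then gives it the coefficient `0`. -/
def posetQSym [Preorder ι] (w : P → ℕ) : MvPowerSeries ι R :=
  fun d => Nat.card (StrictLabelling w d)

theorem coeff_posetQSym [Preorder ι] (w : P → ℕ) (d : ι →₀ ℕ) :
    coeff d (posetQSym ι R w) = Nat.card (StrictLabelling w d) :=
  rfl

theorem posetQSym_mul_posetQSym [Preorder ι] [Fintype Q] [Preorder Q] {v : P → ℕ} {w : Q → ℕ}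
    (hv : ∀ p, 0 < v p) (hw : ∀ q, 0 < w q) :
    posetQSym ι R v * posetQSym ι R w = posetQSym ι R (Sum.elim v w) := by
  classical
  ext d
  have finite_left (e) := StrictLabelling.finite (ι := ι) hv e
  have finite_right (e) := StrictLabelling.finite (ι := ι) hw e
  simp only [coeff_mul, coeff_posetQSym]
  rw [Nat.card_congr (StrictLabelling.sumEquiv v w d), Nat.card_sigma,
    Finset.sum_coe_sort (Finset.HasAntidiagonal.antidiagonal d)
      fun e => Nat.card (StrictLabelling v e.1 × StrictLabelling w e.2)]
  simp only [Nat.card_prod, Nat.cast_sum, Nat.cast_mul]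

theorem posetQSym_eq_sum_chainQuotients [LinearOrder ι] {w : P → ℕ} (hw : ∀ p, 0 < w p) :
    posetQSym ι R w = ∑ x ∈ chainQuotients P, posetQSym ι R (fiberWeight w x.2) := by
  ext d
  have finite_fiber (x : chainQuotients P) : Finite (StrictLabelling (fiberWeight w x.1.2) d) :=
    StrictLabelling.finite (fiberWeight_pos hw (mem_chainQuotients.1 x.2).1) d
  simp only [map_sum, coeff_posetQSym]
  rw [← Nat.card_eq_of_bijective _ (StrictLabelling.ofChainQuotient_bijective w d),
    Nat.card_sigma, Finset.sum_coe_sort (chainQuotients P)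
      fun x => Nat.card (StrictLabelling (fiberWeight w x.2) d), Nat.cast_sum]

end PosetQSym

section Chains

variable {ι : Type*} [LinearOrder ι]

theorem MqsN_eq_posetQSym {L : List ℕ} (hL : ∀ a ∈ L, 0 < a) :
    MqsN ι L = posetQSym ι ℤ L.get := by
  classical
  ext d
  have := StrictLabelling.subsingleton (ι := ι) (fun k => hL _ (L.get_mem k)) d
  have exists_iff : (∃ i : Fin L.length → ι, StrictMono i ∧ d = qsMonomN L i) ↔
      Nonempty (StrictLabelling L.get d) := by
    simp only [StrictLabelling, nonempty_subtype, eq_comm (a := d)]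
    rfl
  rw [coeff_posetQSym]
  change (if _ then 1 else 0 : ℤ) = _
  rw [if_congr exists_iff rfl rfl]
  split_ifs with h
  · rw [Nat.card_eq_one_iff_unique.2 ⟨this, h⟩, Nat.cast_one]
  · rw [not_nonempty_iff] at h
    rw [Nat.card_of_isEmpty, Nat.cast_zero]

theorem MqsN_ofFn {n : ℕ} {w : Fin n → ℕ} (hw : ∀ x, 0 < w x) :
    MqsN ι (List.ofFn w) = posetQSym ι ℤ w := by
  rw [MqsN_eq_posetQSym (by simpa [List.forall_mem_ofFn_iff] using hw)]
  exact congrArg (fun s : Σ n, Fin n → ℕ => posetQSym ι ℤ s.2)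
    (List.equivSigmaTuple.apply_symm_apply ⟨n, w⟩)

end Chains

open Classical in
theorem monomial_qsym_product_rule_general (ι : Type*) [LinearOrder ι]
    (I J : List ℕ) (hI : ∀ a ∈ I, 0 < a) (hJ : ∀ a ∈ J, 0 < a) :
    MqsN ι I * MqsN ι J =
      ∑ n ∈ Finset.range (I.length + J.length + 1),
        ∑ f ∈ Finset.univ.filter
            (fun f : (Fin I.length ⊕ Fin J.length) → Fin n =>
              Function.Surjective f ∧ StrictMono f),
          MqsN ι (List.ofFn (fun x : Fin n =>
            (∑ u ∈ Finset.univ.filter (fun u : Fin I.length => f (Sum.inl u) = x), I.get u) +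
            (∑ u ∈ Finset.univ.filter (fun u : Fin J.length => f (Sum.inr u) = x), J.get u))) := by
  have hIget (u : Fin I.length) : 0 < I.get u := hI _ (I.get_mem u)
  have hJget (u : Fin J.length) : 0 < J.get u := hJ _ (J.get_mem u)
  have hw : ∀ p, 0 < Sum.elim I.get J.get p := Sum.rec hIget hJget
  rw [MqsN_eq_posetQSym hI, MqsN_eq_posetQSym hJ, posetQSym_mul_posetQSym ι ℤ hIget hJget,
    posetQSym_eq_sum_chainQuotients ι ℤ hw, chainQuotients, Finset.sum_sigma, Fintype.card_sum,
    Fintype.card_fin, Fintype.card_fin]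
  -- The two filters differ only in their decidability instances.
  refine Finset.sum_congr rfl fun n _ => Finset.sum_congr (by ext; simp) fun f hf => ?_
  have f_surjective : Surjective f := (Finset.mem_filter.1 hf).2.1
  rw [← MqsN_ofFn (fiberWeight_pos hw f_surjective), fiberWeight_sumElim]
  rfl

open Classical in
theorem monomial_qsym_product_rule (ι : Type*) [LinearOrder ι] [Infinite ι]
    (I J : List ℕ) (hI : ∀ a ∈ I, 0 < a) (hJ : ∀ a ∈ J, 0 < a)
    (hIlen : 0 < I.length) (hJlen : 0 < J.length) :
    MqsN ι I * MqsN ι J =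
      ∑ n ∈ Finset.range (I.length + J.length + 1),
        ∑ f ∈ Finset.univ.filter
            (fun f : (Fin I.length ⊕ Fin J.length) → Fin n =>
              Function.Surjective f ∧ StrictMono f),
          MqsN ι (List.ofFn (fun x : Fin n =>
            (∑ u ∈ Finset.univ.filter (fun u : Fin I.length => f (Sum.inl u) = x), I.get u) +
            (∑ u ∈ Finset.univ.filter (fun u : Fin J.length => f (Sum.inr u) = x), J.get u))) :=
  monomial_qsym_product_rule_general ι I J hI hJ

end
end

section
/- For every n ≥ 1, the number of Lyndon compositions of n equals b_n := (1/n) Σ_{d | n} μ(d)(2^{n/d} − 1), where μ is the number-theoretic Möbius function. -/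
/-!
STATEMENT 5: For every `n ≥ 1`, the number of Lyndon compositions of `n` equals
`b_n = (1/n) Σ_{d ∣ n} μ(d) (2^{n/d} − 1)`.
-/

/-- The (strict) lexicographic-type order on compositions: `I < J` iff either the entries agree
up to some index `k` valid in both and `I_k < J_k`, or `I` is a proper prefix of `J`. -/
def CompLT (I J : List ℕ+) : Prop :=
  (∃ (k : ℕ) (hI : k < I.length) (hJ : k < J.length),
      (∀ j : ℕ, j < k → ∀ (h₁ : j < I.length) (h₂ : j < J.length),
        I.get ⟨j, h₁⟩ = J.get ⟨j, h₂⟩) ∧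
      I.get ⟨k, hI⟩ < J.get ⟨k, hJ⟩) ∨
  (I <+: J ∧ I ≠ J)

/-- A composition is Lyndon if it is nonempty and every nonempty proper suffix is strictly
greater than it: whenever `I = J ++ K` with `J, K` nonempty, then `I < K`. -/
def IsLyndonComp (I : List ℕ+) : Prop :=
  I ≠ [] ∧ ∀ J K : List ℕ+, J ≠ [] → K ≠ [] → I = J ++ K → CompLT I K

/-!
Every nonempty word is a rotation of a power `w ^ k` of a unique Lyndon word `w`, and
`w ^ k` has exactly `w.length` distinct rotations, whose first letters run through the letters of
`w`. So if each composition of `n` is weighted by its first part, the compositions arising from a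
given Lyndon composition of `d ∣ n` have total weight `d`. On the other hand the first parts of all
compositions of `n` add up to `2 ^ n - 1`, and Möbius inversion finishes the proof.
-/

open Finset Function

section WordPow

variable {α : Type*}

/-- The `k`-th power of the word `w`, i.e. `w ++ ⋯ ++ w` with `k` factors. -/
def wordPow (w : List α) (k : ℕ) : List α := (List.replicate k w).flatten

@[simp]
theorem wordPow_zero (w : List α) : wordPow w 0 = [] := rfl

theorem wordPow_succ (w : List α) (k : ℕ) : wordPow w (k + 1) = w ++ wordPow w k := rfl

@[simp]
theorem length_wordPow (w : List α) (k : ℕ) : (wordPow w k).length = k * w.length := by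
  simp [wordPow]

theorem take_length_wordPow (w : List α) {k : ℕ} (hk : k ≠ 0) :
    (wordPow w k).take w.length = w := by
  obtain ⟨k, rfl⟩ := Nat.exists_eq_succ_of_ne_zero hk
  exact List.take_left

theorem eq_of_wordPow_eq_wordPow {u v : List α} (hlen : u.length = v.length) {k : ℕ}
    (hk : k ≠ 0) (h : wordPow u k = wordPow v k) : u = v := by
  rw [← take_length_wordPow u hk, h, hlen, take_length_wordPow v hk]

theorem wordPow_append_append (u v : List α) (k : ℕ) :
    wordPow (u ++ v) k ++ u = u ++ wordPow (v ++ u) k := by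
  induction k with
  | zero => simp
  | succ k ih => simp only [wordPow_succ, List.append_assoc, ih]

theorem rotate_one_wordPow (w : List α) (k : ℕ) :
    (wordPow w k).rotate 1 = wordPow (w.rotate 1) k := by
  cases w with
  | nil => simp [wordPow]
  | cons a t =>
    cases k with
    | zero => simp
    | succ k => simpa [wordPow_succ] using wordPow_append_append [a] t k

theorem rotate_wordPow (w : List α) (k i : ℕ) :
    (wordPow w k).rotate i = wordPow (w.rotate i) k := by
  induction i with
  | zero => simp
  | succ i ih => rw [← List.rotate_rotate, ih, rotate_one_wordPow, List.rotate_rotate]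

theorem eq_wordPow_of_append_comm {w r : List α} {k : ℕ} (hlen : r.length = k * w.length)
    (hcomm : r ++ w = w ++ r) : r = wordPow w k := by
  induction k generalizing r with
  | zero => simpa using hlen
  | succ k ih =>
    have hprefix : w <+: r :=
      List.prefix_of_prefix_length_le (hcomm ▸ List.prefix_append w r) (List.prefix_append r w)
        (by rw [hlen]; exact Nat.le_mul_of_pos_left _ k.succ_pos)
    obtain ⟨s, rfl⟩ := hprefix
    rw [wordPow_succ, ← ih (by simpa [add_mul, add_comm] using hlen) (by simpa using hcomm)]

end WordPow

section RotationPeriod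

variable {α : Type*}

/-- The least `p > 0` such that rotating `w` by `p` letters gives `w` back, so that `w` has exactly
`rotationPeriod w` distinct rotations. The word `w` is primitive, i.e. not a proper power, when
`rotationPeriod w = w.length`. The empty word has period `1`. -/
noncomputable def rotationPeriod (w : List α) : ℕ := minimalPeriod (fun l ↦ l.rotate 1) w

theorem iterate_rotate_one (w : List α) (i : ℕ) : (fun l ↦ l.rotate 1)^[i] w = w.rotate i := by
  induction i with
  | zero => simp
  | succ i ih => rw [iterate_succ_apply', ih, List.rotate_rotate]

theorem isPeriodicPt_rotate_one_iff {w : List α} {i : ℕ} :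
    IsPeriodicPt (fun l ↦ l.rotate 1) i w ↔ w.rotate i = w := by
  rw [IsPeriodicPt, IsFixedPt, iterate_rotate_one]

theorem rotate_eq_self_iff_rotationPeriod_dvd {w : List α} {i : ℕ} :
    w.rotate i = w ↔ rotationPeriod w ∣ i := by
  rw [← isPeriodicPt_rotate_one_iff, isPeriodicPt_iff_minimalPeriod_dvd, rotationPeriod]

theorem rotationPeriod_dvd_length (w : List α) : rotationPeriod w ∣ w.length :=
  rotate_eq_self_iff_rotationPeriod_dvd.1 w.rotate_length

theorem rotate_injOn_Iio_rotationPeriod (w : List α) :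
    (Set.Iio (rotationPeriod w)).InjOn (w.rotate ·) := by
  simpa only [iterate_rotate_one, rotationPeriod] using
    iterate_injOn_Iio_minimalPeriod (f := fun l : List α ↦ l.rotate 1) (x := w)

theorem rotationPeriod_wordPow (w : List α) {k : ℕ} (hk : k ≠ 0) :
    rotationPeriod (wordPow w k) = rotationPeriod w := by
  refine minimalPeriod_eq_minimalPeriod_iff.2 fun i ↦ ?_
  rw [isPeriodicPt_rotate_one_iff, isPeriodicPt_rotate_one_iff, rotate_wordPow]
  exact ⟨eq_of_wordPow_eq_wordPow (by simp) hk, congrArg (wordPow · k)⟩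

theorem exists_primitive_wordPow_eq {m : List α} (hm : m ≠ []) :
    ∃ w k, k ≠ 0 ∧ wordPow w k = m ∧ rotationPeriod w = w.length := by
  set p := rotationPeriod m
  obtain ⟨k, hk⟩ := rotationPeriod_dvd_length m
  have hlen : m.length ≠ 0 := by simpa using hm
  have hk0 : k ≠ 0 := by rintro rfl; exact hlen (by simpa using hk)
  have hple : p ≤ m.length := Nat.le_of_dvd (by omega) (rotationPeriod_dvd_length m)
  have hplen : (m.take p).length = p := by simpa using hple
  have hrot : m.drop p ++ m.take p = m := by
    rw [← List.rotate_eq_drop_append_take hple]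
    exact rotate_eq_self_iff_rotationPeriod_dvd.2 dvd_rfl
  have hpow : m = wordPow (m.take p) k := by
    apply eq_wordPow_of_append_comm
    · rw [hplen, hk, mul_comm]
    · calc m ++ m.take p = m.take p ++ (m.drop p ++ m.take p) := by
            rw [← List.append_assoc, List.take_append_drop]
        _ = m.take p ++ m := by rw [hrot]
  refine ⟨m.take p, k, hk0, hpow.symm, ?_⟩
  rw [← rotationPeriod_wordPow _ hk0, ← hpow, hplen]

end RotationPeriod

section Lex

variable {α : Type*} [LinearOrder α]

theorem isPrefix_or_append_lt_append_of_lt {u v : List α} (h : u < v) :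
    u <+: v ∨ ∀ x y, u ++ x < v ++ y := by
  induction u generalizing v with
  | nil => exact Or.inl List.nil_prefix
  | cons a u ih =>
    cases v with
    | nil => simp at h
    | cons b v =>
      simp only [List.cons_append, List.cons_lt_cons_iff, List.cons_prefix_cons] at h ⊢
      rcases h with hab | ⟨rfl, huv⟩
      · exact Or.inr fun _ _ ↦ Or.inl hab
      · exact (ih huv).imp (⟨rfl, ·⟩) fun h x y ↦ Or.inr ⟨rfl, h x y⟩

theorem le_append_left (u v : List α) : u ≤ u ++ v :=
  not_lt.1 (List.prefix_append u v).le

theorem append_lt_append_of_length_eq {u v : List α} (hlen : u.length = v.length) (h : u < v)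
    (x y : List α) : u ++ x < v ++ y :=
  (isPrefix_or_append_lt_append_of_lt h).resolve_left
    (fun hprefix ↦ h.ne (hprefix.eq_of_length hlen)) x y

theorem wordPow_le_wordPow_iff {u v : List α} (hlen : u.length = v.length) {k : ℕ} (hk : k ≠ 0) :
    wordPow u k ≤ wordPow v k ↔ u ≤ v := by
  have wordPow_lt {u v : List α} (hlen : u.length = v.length) (h : u < v) :
      wordPow u k < wordPow v k := by
    obtain ⟨k, rfl⟩ := Nat.exists_eq_succ_of_ne_zero hk
    exact append_lt_append_of_length_eq hlen h _ _
  refine ⟨fun h ↦ le_of_not_gt fun hvu ↦ (wordPow_lt hlen.symm hvu).not_ge h, fun h ↦ ?_⟩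
  rcases h.lt_or_eq with huv | rfl
  · exact (wordPow_lt hlen huv).le
  · exact le_rfl

theorem exists_isRotated_forall_le_rotate (c : List α) :
    ∃ m, m ~r c ∧ ∀ i, m ≤ m.rotate i := by
  obtain ⟨m, hmc, hmin⟩ := c.cyclicPermutations.toFinset.exists_minimal
    ⟨c, by simp [List.IsRotated.refl]⟩
  simp only [List.mem_toFinset, List.mem_cyclicPermutations_iff] at hmc hmin
  exact ⟨m, hmc, fun i ↦ le_of_not_gt fun hlt ↦
    hlt.not_ge (hmin ((List.IsRotated.forall m i).trans hmc) hlt.le)⟩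

theorem eq_of_isRotated_of_forall_le_rotate {m m' : List α} (h : m ~r m')
    (hm : ∀ i, m ≤ m.rotate i) (hm' : ∀ i, m' ≤ m'.rotate i) : m = m' := by
  obtain ⟨i, hi⟩ := h
  obtain ⟨j, hj⟩ := List.IsRotated.symm ⟨i, hi⟩
  exact le_antisymm (hi ▸ hm i) (hj ▸ hm' j)

end Lex

section LyndonWord

variable {α : Type*} [LinearOrder α]

/-- A Lyndon word, defined as a nonempty word strictly smaller than its proper rotations; see
`isLyndonComp_iff_isLyndonWord` for the equivalence with the definition by suffixes. -/
def IsLyndonWord (w : List α) : Prop :=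
  w ≠ [] ∧ ∀ i, 0 < i → i < w.length → w < w.rotate i

theorem isLyndonWord_iff_primitive_and_le_rotate {w : List α} :
    IsLyndonWord w ↔ w ≠ [] ∧ rotationPeriod w = w.length ∧ ∀ i, w ≤ w.rotate i := by
  refine and_congr_right fun hw ↦ ⟨fun hlt ↦ ?_, fun ⟨hprim, hle⟩ i hi hiw ↦ ?_⟩
  · have hlen : 0 < w.length := List.length_pos_iff.2 hw
    have hperiod : 0 < rotationPeriod w := Nat.pos_of_dvd_of_pos (rotationPeriod_dvd_length w) hlen
    refine ⟨(Nat.le_of_dvd hlen (rotationPeriod_dvd_length w)).eq_of_not_lt fun h ↦ ?_, fun i ↦ ?_⟩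
    · exact (hlt _ hperiod h).ne' (rotate_eq_self_iff_rotationPeriod_dvd.2 dvd_rfl)
    · rw [← List.rotate_mod]
      rcases Nat.eq_zero_or_pos (i % w.length) with h0 | hpos
      · rw [h0, List.rotate_zero]
      · exact (hlt _ hpos (Nat.mod_lt _ hlen)).le
  · refine (hle i).lt_of_ne' fun h ↦ ?_
    rw [rotate_eq_self_iff_rotationPeriod_dvd, hprim] at h
    exact (Nat.le_of_dvd hi h).not_gt hiw

namespace IsLyndonWord

variable {w w' : List α} {k k' : ℕ}

theorem rotationPeriod_wordPow_eq_length (hw : IsLyndonWord w) (hk : k ≠ 0) :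
    rotationPeriod (wordPow w k) = w.length := by
  rw [rotationPeriod_wordPow w hk, (isLyndonWord_iff_primitive_and_le_rotate.1 hw).2.1]

theorem wordPow_le_rotate (hw : IsLyndonWord w) (hk : k ≠ 0) (i : ℕ) :
    wordPow w k ≤ (wordPow w k).rotate i := by
  rw [rotate_wordPow, wordPow_le_wordPow_iff (by simp) hk]
  exact (isLyndonWord_iff_primitive_and_le_rotate.1 hw).2.2 i

theorem eq_of_wordPow_isRotated (hw : IsLyndonWord w) (hw' : IsLyndonWord w') (hk : k ≠ 0)
    (hk' : k' ≠ 0) (h : wordPow w k ~r wordPow w' k') : w = w' ∧ k = k' := by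
  have hpow : wordPow w k = wordPow w' k' :=
    eq_of_isRotated_of_forall_le_rotate h (hw.wordPow_le_rotate hk) (hw'.wordPow_le_rotate hk')
  have hlen : w.length = w'.length := by
    rw [← hw.rotationPeriod_wordPow_eq_length hk, hpow, hw'.rotationPeriod_wordPow_eq_length hk']
  refine ⟨?_, ?_⟩
  · rw [← take_length_wordPow w hk, hpow, hlen, take_length_wordPow w' hk']
  · have := congrArg List.length hpow
    rw [length_wordPow, length_wordPow, hlen] at this
    exact Nat.eq_of_mul_eq_mul_right (List.length_pos_iff.2 hw'.1) this

theorem eq_of_rotate_wordPow_eq (hw : IsLyndonWord w) (hw' : IsLyndonWord w') (hk : k ≠ 0)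
    (hk' : k' ≠ 0) {i i' : ℕ} (hi : i < w.length) (hi' : i' < w'.length)
    (h : (wordPow w k).rotate i = (wordPow w' k').rotate i') : w = w' ∧ k = k' ∧ i = i' := by
  have hrotated : wordPow w k ~r wordPow w' k' :=
    (List.IsRotated.forall _ i).symm.trans (h ▸ List.IsRotated.forall _ i')
  obtain ⟨rfl, rfl⟩ := hw.eq_of_wordPow_isRotated hw' hk hk' hrotated
  have hperiod := hw.rotationPeriod_wordPow_eq_length hk
  refine ⟨rfl, rfl, rotate_injOn_Iio_rotationPeriod _ ?_ ?_ h⟩ <;> rwa [hperiod, Set.mem_Iio]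

end IsLyndonWord

theorem exists_isLyndonWord_wordPow_isRotated {c : List α} (hc : c ≠ []) :
    ∃ w k, IsLyndonWord w ∧ k ≠ 0 ∧ wordPow w k ~r c := by
  obtain ⟨m, hmc, hmin⟩ := exists_isRotated_forall_le_rotate c
  have hm : m ≠ [] := by rintro rfl; exact hc (List.isRotated_nil_iff'.1 hmc).symm
  obtain ⟨w, k, hk, rfl, hprim⟩ := exists_primitive_wordPow_eq hm
  refine ⟨w, k, isLyndonWord_iff_primitive_and_le_rotate.2 ⟨?_, hprim, fun i ↦ ?_⟩, hk, hmc⟩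
  · rintro rfl
    simp [wordPow] at hm
  · rw [← wordPow_le_wordPow_iff (by simp) hk, ← rotate_wordPow]
    exact hmin i

theorem isLyndonWord_iff_forall_lt_append_swap {w : List α} :
    IsLyndonWord w ↔ w ≠ [] ∧ ∀ u v, u ≠ [] → v ≠ [] → w = u ++ v → w < v ++ u := by
  refine and_congr_right fun _ ↦ ⟨?_, fun h i hi hiw ↦ ?_⟩
  · rintro h u v hu hv rfl
    rw [← List.length_pos_iff] at hu hv
    simpa only [List.rotate_append_length_eq] using
      h u.length hu (by rw [List.length_append]; omega)
  · rw [List.rotate_eq_drop_append_take hiw.le]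
    refine h _ _ ?_ ?_ (w.take_append_drop i).symm
    · rw [← List.length_pos_iff, List.length_take]
      omega
    · rw [← List.length_pos_iff, List.length_drop]
      omega

theorem IsLyndonWord.lt_suffix {u v : List α} (h : IsLyndonWord (u ++ v)) (hu : u ≠ [])
    (hv : v ≠ []) : u ++ v < v := by
  have hswap := (isLyndonWord_iff_forall_lt_append_swap.1 h).2
  by_contra! hle
  have hlt : v < u ++ v := hle.lt_of_ne fun heq ↦ hu (List.self_eq_append_left.1 heq)
  rcases isPrefix_or_append_lt_append_of_lt hlt with ⟨s, hs⟩ | happend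
  · have hlen : s.length = u.length := by
      have := congrArg List.length hs
      simp only [List.length_append] at this
      omega
    have hs0 : s ≠ [] := by
      rw [← List.length_pos_iff, hlen]
      exact List.length_pos_iff.2 hu
    have hsv : u ++ v < s ++ v := hswap v s hv hs0 hs.symm
    have hvu : v ++ s < v ++ u := hs ▸ hswap u v hu hv rfl
    rcases lt_trichotomy s u with hsu | rfl | hus
    · exact hsv.not_gt (append_lt_append_of_length_eq hlen hsu v v)
    · exact hsv.false
    · exact hvu.not_gt (List.append_left_lt hus)
  · exact (hswap u v hu hv rfl).not_gt (by simpa using happend u [])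

theorem isLyndonWord_iff_forall_lt_suffix {w : List α} :
    IsLyndonWord w ↔ w ≠ [] ∧ ∀ u v, u ≠ [] → v ≠ [] → w = u ++ v → w < v := by
  refine ⟨fun h ↦ ⟨h.1, ?_⟩, fun ⟨hw, h⟩ ↦ ?_⟩
  · rintro u v hu hv rfl
    exact h.lt_suffix hu hv
  · refine isLyndonWord_iff_forall_lt_append_swap.2 ⟨hw, fun u v hu hv huv ↦ ?_⟩
    exact (h u v hu hv huv).trans_le (le_append_left v u)

end LyndonWord

section LyndonComposition

theorem compLT_iff_lt {I J : List ℕ+} : CompLT I J ↔ I < J := by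
  rw [List.lt_iff_exists, CompLT, or_comm]
  refine or_congr ?_ ⟨?_, ?_⟩
  · rw [← List.prefix_iff_eq_take]
    exact and_congr_right fun h ↦
      ⟨fun hne ↦ h.length_le.lt_of_ne (hne ∘ h.eq_of_length), by rintro hlt rfl; exact hlt.false⟩
  · rintro ⟨k, hI, hJ, heq, hlt⟩
    exact ⟨k, hI, hJ, fun j hj ↦ heq j hj _ _, hlt⟩
  · rintro ⟨k, hI, hJ, heq, hlt⟩
    exact ⟨k, hI, hJ, fun j hj _ _ ↦ heq j hj, hlt⟩

theorem isLyndonComp_iff_isLyndonWord {w : List ℕ+} : IsLyndonComp w ↔ IsLyndonWord w := by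
  simp only [IsLyndonComp, isLyndonWord_iff_forall_lt_suffix, compLT_iff_lt]

end LyndonComposition

section Compositions

/-- The integer of which the list `w` of positive parts is a composition. -/
def partsSum (w : List ℕ+) : ℕ := (w.map PNat.val).sum

@[simp]
theorem partsSum_nil : partsSum [] = 0 := rfl

@[simp]
theorem partsSum_cons (a : ℕ+) (w : List ℕ+) : partsSum (a :: w) = a + partsSum w := by
  simp [partsSum]

theorem partsSum_eq_zero {w : List ℕ+} : partsSum w = 0 ↔ w = [] := by
  cases w <;> simp

theorem partsSum_rotate (w : List ℕ+) (i : ℕ) : partsSum (w.rotate i) = partsSum w :=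
  ((w.rotate_perm i).map _).sum_eq

theorem partsSum_wordPow (w : List ℕ+) (k : ℕ) : partsSum (wordPow w k) = k * partsSum w := by
  simp [partsSum, wordPow, List.map_flatten, List.sum_flatten]

/-- The compositions of `n` as words in the letters `ℕ+`, the encoding of `CompLT`; Mathlib's
`Composition n` has blocks in `ℕ`. -/
def compositions (n : ℕ) : Finset (List ℕ+) :=
  univ.image fun c : Composition n ↦ c.blocks.map Nat.toPNat'

theorem map_val_map_toPNat' {l : List ℕ} (hl : ∀ a ∈ l, 0 < a) :
    (l.map Nat.toPNat').map PNat.val = l := by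
  rw [List.map_map]
  conv_rhs => rw [← l.map_id]
  exact List.map_congr_left fun a ha ↦ PNat.toPNat'_coe (hl a ha)

theorem mem_compositions {n : ℕ} {w : List ℕ+} : w ∈ compositions n ↔ partsSum w = n := by
  simp only [compositions, mem_image, mem_univ, true_and]
  refine ⟨?_, fun h ↦ ⟨⟨w.map PNat.val, by simp +contextual, h⟩, by simp [comp_def]⟩⟩
  rintro ⟨c, rfl⟩
  rw [partsSum, map_val_map_toPNat' fun _ ↦ c.blocks_pos, c.blocks_sum]

theorem card_compositions (n : ℕ) : #(compositions n) = 2 ^ (n - 1) := by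
  rw [compositions, card_image_of_injective, card_univ, composition_card]
  intro c c' h
  refine Composition.ext ?_
  dsimp only at h
  rw [← map_val_map_toPNat' fun _ ↦ c.blocks_pos, h, map_val_map_toPNat' fun _ ↦ c'.blocks_pos]

/-- The first part of a composition, with the value `0` for the empty composition. -/
def firstPart (w : List ℕ+) : ℕ := w.head?.elim 0 (↑)

@[simp]
theorem firstPart_nil : firstPart [] = 0 := rfl

@[simp]
theorem firstPart_cons (a : ℕ+) (w : List ℕ+) : firstPart (a :: w) = a := rfl

theorem firstPart_wordPow (w : List ℕ+) {k : ℕ} (hk : k ≠ 0) :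
    firstPart (wordPow w k) = firstPart w := by
  rw [firstPart, wordPow, List.head?_flatten_replicate hk, firstPart]

theorem sum_firstPart_rotate (w : List ℕ+) :
    ∑ i ∈ range w.length, firstPart (w.rotate i) = partsSum w := by
  rw [Finset.sum_range, partsSum, ← Fin.sum_univ_fun_getElem]
  refine sum_congr rfl fun i _ ↦ ?_
  rw [firstPart, List.head?_rotate i.2, List.getElem?_eq_getElem i.2, Option.elim_some]

theorem sum_firstPart_compositions_succ (n : ℕ) :
    ∑ w ∈ compositions (n + 1), firstPart w = 2 ^ n + ∑ w ∈ compositions n, firstPart w := by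
  have hpos {w} (hw : w ∈ compositions (n + 1)) : firstPart w = 1 + (firstPart w - 1) := by
    cases w with
    | nil => simp [mem_compositions] at hw
    | cons a w => have := a.pos; simp only [firstPart_cons]; omega
  rw [sum_congr rfl fun _ ↦ hpos, sum_add_distrib, sum_const, card_compositions,
    smul_eq_mul, mul_one, Nat.add_sub_cancel]
  congr 1
  symm
  -- Adding `1` to the first part is a bijection onto the compositions with first part at least `2`.
  refine sum_bij_ne_zero (fun w _ _ ↦ w.modifyHead (· + 1)) ?_ ?_ ?_ ?_
  · rintro (_ | ⟨a, w⟩) hw ha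
    · simp at ha
    · rw [mem_compositions, partsSum_cons] at hw
      rw [mem_compositions, List.modifyHead_cons, partsSum_cons, PNat.add_coe, PNat.one_coe]
      omega
  · rintro (_ | ⟨a, w⟩) _ ha (_ | ⟨b, v⟩) _ hb h <;> simp_all
  · rintro (_ | ⟨a, w⟩) hw ha
    · simp at ha
    · have ha1 : a ≠ 1 := by rintro rfl; simp at ha
      obtain ⟨b, rfl⟩ := PNat.exists_eq_succ_of_ne_one ha1
      refine ⟨b :: w, ?_, by simp, rfl⟩
      rw [mem_compositions, partsSum_cons, PNat.add_coe, PNat.one_coe] at hw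
      rw [mem_compositions, partsSum_cons]
      omega
  · rintro (_ | ⟨a, w⟩) _ ha
    · simp at ha
    · simp

theorem sum_firstPart_compositions (n : ℕ) :
    ∑ w ∈ compositions n, firstPart w + 1 = 2 ^ n := by
  induction n with
  | zero => simp +contextual [sum_eq_zero, mem_compositions, partsSum_eq_zero]
  | succ n ih => rw [sum_firstPart_compositions_succ, add_assoc, ih, pow_succ, mul_two]

end Compositions

section LyndonCompositions

open Classical in
/-- The Lyndon compositions of `n`. -/
noncomputable def lyndonCompositions (n : ℕ) : Finset (List ℕ+) :=
  (compositions n).filter IsLyndonComp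

theorem mem_lyndonCompositions {n : ℕ} {w : List ℕ+} :
    w ∈ lyndonCompositions n ↔ partsSum w = n ∧ IsLyndonWord w := by
  classical rw [lyndonCompositions, mem_filter, mem_compositions, isLyndonComp_iff_isLyndonWord]

theorem sum_compositions_eq_sum_lyndonCompositions {M : Type*} [AddCommMonoid M] {n : ℕ}
    (hn : n ≠ 0) (f : List ℕ+ → M) :
    ∑ c ∈ compositions n, f c = ∑ d ∈ n.divisors, ∑ w ∈ lyndonCompositions d,
      ∑ i ∈ range w.length, f ((wordPow w (n / d)).rotate i) := by
  have hdiv {d : ℕ} (hd : d ∣ n) : n / d ≠ 0 := (Nat.div_ne_zero_iff_of_dvd hd).2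
    ⟨hn, ne_zero_of_dvd_ne_zero hn hd⟩
  rw [sum_sigma', sum_sigma']
  symm
  refine sum_nbij (fun x ↦ (wordPow x.1.2 (n / x.1.1)).rotate x.2) ?_ ?_ ?_ fun _ _ ↦ rfl
  · rintro ⟨⟨d, w⟩, i⟩ h
    simp only [mem_sigma, Nat.mem_divisors, mem_lyndonCompositions] at h
    obtain ⟨⟨⟨hd, -⟩, hwd, -⟩, -⟩ := h
    rw [mem_compositions, partsSum_rotate, partsSum_wordPow, hwd, Nat.div_mul_cancel hd]
  · rintro ⟨⟨d, w⟩, i⟩ h ⟨⟨d', w'⟩, i'⟩ h' heq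
    simp only [coe_sigma, Set.mem_sigma_iff, mem_coe, Nat.mem_divisors,
      mem_lyndonCompositions, mem_range] at h h'
    obtain ⟨⟨⟨hd, -⟩, rfl, hw⟩, hi⟩ := h
    obtain ⟨⟨⟨hd', -⟩, rfl, hw'⟩, hi'⟩ := h'
    obtain ⟨rfl, -, hii'⟩ := hw.eq_of_rotate_wordPow_eq hw' (hdiv hd) (hdiv hd') hi hi' heq
    exact congrArg _ hii'
  · intro c hc
    rw [mem_coe, mem_compositions] at hc
    have hc0 : c ≠ [] := by rintro rfl; exact hn hc.symm
    obtain ⟨w, k, hw, -, i, hi⟩ := exists_isLyndonWord_wordPow_isRotated hc0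
    have hsum : k * partsSum w = n := by rw [← hc, ← hi, partsSum_rotate, partsSum_wordPow]
    have hw0 : partsSum w ≠ 0 := partsSum_eq_zero.not.2 hw.1
    refine ⟨⟨⟨partsSum w, w⟩, i % w.length⟩, ?_, ?_⟩
    · simp only [mem_coe, mem_sigma, Nat.mem_divisors, mem_lyndonCompositions, mem_range]
      exact ⟨⟨⟨⟨k, by rw [← hsum, mul_comm]⟩, hn⟩, trivial, hw⟩,
        Nat.mod_lt i (List.length_pos_iff.2 hw.1)⟩
    · dsimp only
      rw [← hsum, Nat.mul_div_cancel k (Nat.pos_of_ne_zero hw0), rotate_wordPow, List.rotate_mod,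
        ← rotate_wordPow, hi]

theorem sum_divisors_mul_card_lyndonCompositions {n : ℕ} (hn : n ≠ 0) :
    ∑ d ∈ n.divisors, d * #(lyndonCompositions d) + 1 = 2 ^ n := by
  rw [← sum_firstPart_compositions, sum_compositions_eq_sum_lyndonCompositions hn]
  congr 1
  refine sum_congr rfl fun d hd ↦ ?_
  have hnd : n / d ≠ 0 := (Nat.div_pos (Nat.divisor_le hd) (Nat.pos_of_mem_divisors hd)).ne'
  calc d * #(lyndonCompositions d)
      = ∑ w ∈ lyndonCompositions d, partsSum w := by
        rw [sum_congr rfl fun w hw ↦ (mem_lyndonCompositions.1 hw).1, sum_const, smul_eq_mul,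
          mul_comm]
    _ = _ := by simp only [← sum_firstPart_rotate, rotate_wordPow, firstPart_wordPow _ hnd]

end LyndonCompositions

/-- The number of Lyndon compositions of `n` is `(1/n) Σ_{d ∣ n} μ(d) (2^{n/d} − 1)`. -/
theorem card_lyndon_compositions (n : ℕ) (hn : 1 ≤ n) :
    (Set.ncard {I : List ℕ+ | (I.map fun x => (x : ℕ)).sum = n ∧ IsLyndonComp I} : ℚ) =
      (1 / (n : ℚ)) *
        ∑ d ∈ n.divisors, (ArithmeticFunction.moebius d : ℚ) * (2 ^ (n / d) - 1) := by
  -- Lean coerces the list `I` before mapping, i.e. `I.map fun x => (x : ℕ)` elaborates to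
  -- `(do let a ← I; pure ↑a).map fun x => x`, which `simp` turns into a `flatMap`.
  have hset : {I : List ℕ+ | (I.map fun x => (x : ℕ)).sum = n ∧ IsLyndonComp I} =
      lyndonCompositions n := by
    ext I
    simp [mem_lyndonCompositions, isLyndonComp_iff_isLyndonWord, partsSum, List.map_eq_flatMap]
  have hdivisorSum (m : ℕ) (hm : m > 0) :
      ∑ d ∈ m.divisors, (d * #(lyndonCompositions d) : ℚ) = 2 ^ m - 1 := by
    rw [eq_sub_iff_add_eq]
    exact_mod_cast sum_divisors_mul_card_lyndonCompositions hm.ne'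
  have hinversion := ArithmeticFunction.sum_eq_iff_sum_mul_moebius_eq.1 hdivisorSum n hn
  rw [Nat.sum_divisorsAntidiagonal
    fun a b ↦ (ArithmeticFunction.moebius a : ℚ) * (2 ^ b - 1)] at hinversion
  rw [hset, Set.ncard_coe_finset, hinversion]
  have hn0 : (n : ℚ) ≠ 0 := by positivity
  field_simp
end
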